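/- arXiv:2401.04756 — 2 statements merged into one kernel-verified Lean document; each statement's English description precedes it below -/
import Mathlib

section
/- For every real γ > 0 there exist a real δ > 0 and a constant c > 0, both depending only on γ, such that for every prime p and every nonempty subset A ⊆ 𝔽_p with |A| ≤ p^{1−γ}, one has max(|A+A|, |A·A|) ≥ c·|A|^{1+δ}. -/
open scoped Pointwise

/-!
Suppose `|A + A|` and `|A * A|` are both at most `K |A|`, and discard `0` from `A`. The bound on the
multiplicative energy gives `t ∈ A` and a large `B ⊆ A` such that every dilate `a • A` with `a ∈ B`
has a large intersection with `T = t • A`. By Ruzsa's triangle inequality and covering lemma, each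
such `a • A` is covered by `O(K ^ 3)` translates of `T - T`. Hence for `a, b, c, d ∈ B` the set
`(c - d) • B + (c - d) • B + (a - b) • B` is covered by `O(K ^ 18)` translates of `6 • T - 6 • T`,
which by Plünnecke's inequality has at most `K ^ 12 |A|` elements.

On the other hand, for a suitable `r = (a - b) / (c - d)` the set `B + B + r • B` has at least
`min (|B| ^ 2) p / 2` elements. If every element of `𝔽_p` is such a quotient, an average over `r`
shows this even for `B + r • B`. Otherwise, as `1` generates `𝔽_p`, some quotient `r` has a
successor `r + 1` that is not a quotient; then `(x, y) ↦ x + (r + 1) y` is injective on `B × B`, and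
its image lies in `B + B + r • B`. Comparing the two bounds makes `K` at least a power of `|A|`.
-/

open Finset

section Averaging

variable {ι : Type*} {s : Finset ι}

lemma sq_card_le_card_image_mul_card_collisions {κ : Type*} [DecidableEq κ] (f : ι → κ) :
    #s ^ 2 ≤ #(s.image f) * #{q ∈ s ×ˢ s | f q.1 = f q.2} := by
  have collisions_eq : #{q ∈ s ×ˢ s | f q.1 = f q.2} = ∑ b ∈ s.image f, #{x ∈ s | f x = b} ^ 2 := by
    rw [card_eq_sum_card_fiberwise (f := fun q ↦ f q.1) (t := s.image f)]
    · refine sum_congr rfl fun b _ ↦ ?_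
      rw [sq, ← card_product, filter_filter, ← filter_product]
      congr 1
      ext q
      simp only [mem_filter]
      grind
    · intro q hq
      simp only [coe_filter, mem_product, Set.mem_ofPred_eq] at hq
      exact mem_image_of_mem f hq.1.1
  rw [collisions_eq, card_eq_sum_card_image f s]
  exact sq_sum_le_card_mul_sum_sq

lemma card_le_two_mul_card_popular {f : ι → ℝ} {K M : ℝ} (hK : 0 ≤ K) (hM : 0 < M)
    (hf : ∀ i ∈ s, f i ≤ M) (hsum : M * #s ≤ K * ∑ i ∈ s, f i) :
    (#s : ℝ) ≤ 2 * K * #{i ∈ s | M ≤ 2 * K * f i} := by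
  have pointwise_bound : ∀ i ∈ s,
      2 * K * f i ≤ M + if M ≤ 2 * K * f i then 2 * K * M else 0 := by
    intro i hi
    split_ifs with hpop
    · have := mul_le_mul_of_nonneg_left (hf i hi) (by positivity : 0 ≤ 2 * K)
      linarith
    · linarith
  have summed := sum_le_sum pointwise_bound
  rw [← mul_sum, sum_add_distrib, ← sum_filter, sum_const, sum_const, nsmul_eq_mul,
    nsmul_eq_mul] at summed
  refine le_of_mul_le_mul_left ?_ hM
  linarith

end Averaging

section Projections

variable {F : Type*} [Field F] [Fintype F] [DecidableEq F]

lemma card_filter_add_mul_eq_le_one {x y : F × F} (hxy : x ≠ y) :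
    #{ξ : F | x.1 + ξ * x.2 = y.1 + ξ * y.2} ≤ 1 := by
  refine card_le_one.2 fun ξ hξ η hη ↦ ?_
  simp only [mem_filter, mem_univ, true_and] at hξ hη
  have hsnd : x.2 ≠ y.2 := fun h ↦ hxy (Prod.ext (by simpa [h] using hξ) h)
  have hprod : (ξ - η) * (x.2 - y.2) = 0 := by linear_combination hξ - hη
  exact sub_eq_zero.1 ((mul_eq_zero.1 hprod).resolve_right (sub_ne_zero.2 hsnd))

lemma sum_card_collisions_le (s : Finset (F × F)) :
    ∑ ξ : F, #{q ∈ s ×ˢ s | q.1.1 + ξ * q.1.2 = q.2.1 + ξ * q.2.2} ≤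
      #s * (Fintype.card F + #s) :=
  calc ∑ ξ : F, #{q ∈ s ×ˢ s | q.1.1 + ξ * q.1.2 = q.2.1 + ξ * q.2.2}
      = ∑ q ∈ s ×ˢ s, #{ξ : F | q.1.1 + ξ * q.1.2 = q.2.1 + ξ * q.2.2} := by
        simp only [card_filter]
        exact sum_comm
    _ ≤ ∑ q ∈ s ×ˢ s, ((if q.1 = q.2 then Fintype.card F else 0) + 1) := by
        refine sum_le_sum fun q _ ↦ ?_
        split_ifs with hq
        · exact (card_le_univ _).trans (Nat.le_succ _)
        · simpa using card_filter_add_mul_eq_le_one hq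
    _ = #s * (Fintype.card F + #s) := by
        rw [sum_add_distrib, sum_product]
        simp [mul_add]

lemma exists_card_mul_card_le_card_image_add_mul (s : Finset (F × F)) :
    ∃ ξ : F, #s * Fintype.card F ≤
      #(s.image fun x ↦ x.1 + ξ * x.2) * (Fintype.card F + #s) := by
  obtain rfl | hs := s.eq_empty_or_nonempty
  · exact ⟨0, by simp⟩
  obtain ⟨ξ, -, hξ⟩ : ∃ ξ ∈ (univ : Finset F),
      Fintype.card F * #{q ∈ s ×ˢ s | q.1.1 + ξ * q.1.2 = q.2.1 + ξ * q.2.2} ≤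
        #s * (Fintype.card F + #s) := by
    refine exists_le_of_sum_le univ_nonempty ?_
    rw [← mul_sum, sum_const, card_univ, smul_eq_mul]
    exact Nat.mul_le_mul_left _ (sum_card_collisions_le s)
  refine ⟨ξ, le_of_mul_le_mul_left ?_ hs.card_pos⟩
  have cauchy_schwarz :=
    sq_card_le_card_image_mul_card_collisions (s := s) fun x ↦ x.1 + ξ * x.2
  calc #s * (#s * Fintype.card F) = #s ^ 2 * Fintype.card F := by ring
    _ ≤ #(s.image fun x ↦ x.1 + ξ * x.2) *
          #{q ∈ s ×ˢ s | q.1.1 + ξ * q.1.2 = q.2.1 + ξ * q.2.2} * Fintype.card F :=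
        Nat.mul_le_mul_right _ cauchy_schwarz
    _ = #(s.image fun x ↦ x.1 + ξ * x.2) * (Fintype.card F *
          #{q ∈ s ×ˢ s | q.1.1 + ξ * q.1.2 = q.2.1 + ξ * q.2.2}) := by ring
    _ ≤ #(s.image fun x ↦ x.1 + ξ * x.2) * (#s * (Fintype.card F + #s)) :=
        Nat.mul_le_mul_left _ hξ
    _ = #s * (#(s.image fun x ↦ x.1 + ξ * x.2) * (Fintype.card F + #s)) := by ring

lemma exists_min_card_mul_card_le_card_add_smul (A B : Finset F) :
    ∃ ξ : F, min (#A * #B) (Fintype.card F) ≤ 2 * #(A + ξ • B) := by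
  obtain ⟨ξ, hξ⟩ := exists_card_mul_card_le_card_image_add_mul (A ×ˢ B)
  have image_eq : ((A ×ˢ B).image fun x ↦ x.1 + ξ * x.2) = A + ξ • B := by
    ext z
    simp [mem_add, mem_smul_finset, and_assoc]
  rw [image_eq, card_product] at hξ
  refine ⟨ξ, ?_⟩
  have hmax : 0 < max (#A * #B) (Fintype.card F) := lt_max_of_lt_right Fintype.card_pos
  refine le_of_mul_le_mul_right ?_ hmax
  calc min (#A * #B) (Fintype.card F) * max (#A * #B) (Fintype.card F)
      = #A * #B * Fintype.card F := min_mul_max _ _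
    _ ≤ #(A + ξ • B) * (Fintype.card F + #A * #B) := hξ
    _ ≤ #(A + ξ • B) * (2 * max (#A * #B) (Fintype.card F)) := by gcongr; omega
    _ = 2 * #(A + ξ • B) * max (#A * #B) (Fintype.card F) := by ring

end Projections

section Pivot

variable {F : Type*} [Field F] [DecidableEq F] {B : Finset F} {r : F}

/-- The quotients `(a - b) / (c - d)` with `a, b, c, d ∈ B` and `c ≠ d`: the slopes `r` outside this
set are those for which `(x, y) ↦ x + r * y` is injective on `B ×ˢ B`. The denominator `0` has to be
erased because of the convention `x / 0 = 0`. -/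
def differenceQuotients (B : Finset F) : Finset F := (B - B) / (B - B).erase 0

lemma mem_differenceQuotients :
    r ∈ differenceQuotients B ↔
      ∃ a ∈ B, ∃ b ∈ B, ∃ c ∈ B, ∃ d ∈ B, c ≠ d ∧ (a - b) / (c - d) = r := by
  simp only [differenceQuotients, mem_div, mem_sub, mem_erase]
  constructor
  · rintro ⟨_, ⟨a, ha, b, hb, rfl⟩, _, ⟨hcd, c, hc, d, hd, rfl⟩, rfl⟩
    exact ⟨a, ha, b, hb, c, hc, d, hd, sub_ne_zero.1 hcd, rfl⟩
  · rintro ⟨a, ha, b, hb, c, hc, d, hd, hcd, rfl⟩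
    exact ⟨_, ⟨a, ha, b, hb, rfl⟩, _, ⟨sub_ne_zero.2 hcd, c, hc, d, hd, rfl⟩, rfl⟩

lemma zero_mem_differenceQuotients (hB : B.Nontrivial) : 0 ∈ differenceQuotients B := by
  obtain ⟨c, hc, d, hd, hcd⟩ := hB
  exact mem_differenceQuotients.2 ⟨c, hc, c, hc, c, hc, d, hd, hcd, by simp⟩

lemma sq_card_le_card_add_smul_of_notMem (hr : r ∉ differenceQuotients B) :
    #B ^ 2 ≤ #(B + r • B) := by
  rw [sq, ← card_product]
  refine card_le_card_of_injOn (fun x ↦ x.1 + r * x.2) ?_ ?_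
  · intro x hx
    obtain ⟨hx₁, hx₂⟩ := mem_product.1 hx
    exact add_mem_add hx₁ (smul_mem_smul_finset hx₂)
  · rintro ⟨x₁, x₂⟩ hx ⟨y₁, y₂⟩ hy (hxy : x₁ + r * x₂ = y₁ + r * y₂)
    obtain ⟨hx₁, hx₂⟩ := mem_product.1 hx
    obtain ⟨hy₁, hy₂⟩ := mem_product.1 hy
    have hsnd : x₂ = y₂ := by
      by_contra hne
      refine hr (mem_differenceQuotients.2 ⟨y₁, hy₁, x₁, hx₁, x₂, hx₂, y₂, hy₂, hne, ?_⟩)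
      rw [div_eq_iff (sub_ne_zero.2 hne)]
      linear_combination -hxy
    subst hsnd
    rw [add_right_cancel hxy]

lemma exists_mem_add_one_notMem {n : ℕ} [NeZero n] {S : Finset (ZMod n)} (h0 : 0 ∈ S)
    (hS : S ≠ univ) : ∃ r ∈ S, r + 1 ∉ S := by
  by_contra! hsucc
  have natCast_mem (k : ℕ) : (k : ZMod n) ∈ S := by
    induction k with
    | zero => simpa using h0
    | succ k ih => simpa using hsucc _ ih
  exact hS (eq_univ_iff_forall.2 fun r ↦ by simpa using natCast_mem r.val)

variable {p : ℕ} [Fact p.Prime]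

lemma exists_mem_differenceQuotients_min_le {B : Finset (ZMod p)} (hB : B.Nontrivial) :
    ∃ r ∈ differenceQuotients B, min (#B ^ 2) p ≤ 2 * #(B + B + r • B) := by
  by_cases hquot : differenceQuotients B = univ
  · obtain ⟨r, hr⟩ := exists_min_card_mul_card_le_card_add_smul B B
    rw [← sq, ZMod.card] at hr
    refine ⟨r, hquot ▸ mem_univ r, hr.trans (Nat.mul_le_mul_left _ ?_)⟩
    rw [add_assoc]
    exact card_le_card_add_left hB.nonempty
  · obtain ⟨r, hr, hr_succ⟩ :=
      exists_mem_add_one_notMem (zero_mem_differenceQuotients hB) hquot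
    refine ⟨r, hr, (min_le_left _ _).trans ?_⟩
    have succ_smul_subset : B + (r + 1) • B ⊆ B + B + r • B := by
      rw [add_assoc, add_comm r 1]
      refine add_subset_add_left ?_
      simpa [← coe_subset] using Set.add_smul_subset (1 : ZMod p) r (B : Set (ZMod p))
    calc #B ^ 2 ≤ #(B + (r + 1) • B) := sq_card_le_card_add_smul_of_notMem hr_succ
      _ ≤ #(B + B + r • B) := card_le_card succ_smul_subset
      _ ≤ 2 * #(B + B + r • B) := Nat.le_mul_of_pos_left _ two_pos

lemma exists_min_sq_card_le_card_sub_smul {B : Finset (ZMod p)} (hB : B.Nonempty) :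
    ∃ a ∈ B, ∃ b ∈ B, ∃ c ∈ B, ∃ d ∈ B,
      min (#B ^ 2) p ≤ 2 * #((c - d) • B + (c - d) • B + (a - b) • B) := by
  obtain ⟨x, rfl⟩ | hB' := hB.exists_eq_singleton_or_nontrivial
  · exact ⟨x, by simp, x, by simp, x, by simp, x, by simp, by simp⟩
  obtain ⟨r, hr, hcard⟩ := exists_mem_differenceQuotients_min_le hB'
  obtain ⟨a, ha, b, hb, c, hc, d, hd, hcd, rfl⟩ := mem_differenceQuotients.1 hr
  refine ⟨a, ha, b, hb, c, hc, d, hd, hcard.trans_eq ?_⟩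
  have hcd' : c - d ≠ 0 := sub_ne_zero.2 hcd
  rw [← card_smul_finset₀ hcd', smul_add, smul_add, smul_smul, mul_div_cancel₀ _ hcd']

end Pivot

section PopularDilates

variable {α : Type*} [MonoidWithZero α] [IsLeftCancelMulZero α] [DecidableEq α] {A B : Finset α}

lemma card_filter_mul_eq_mul {a a' : α} (ha : a ≠ 0) (ha' : a' ≠ 0) :
    #{y ∈ B ×ˢ B | a * y.1 = a' * y.2} = #(a • B ∩ a' • B) := by
  refine card_bij (fun y _ ↦ a * y.1) ?_ ?_ ?_
  · simp only [mem_filter, mem_product, mem_inter]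
    rintro ⟨x, y⟩ ⟨⟨hx, hy⟩, hxy⟩
    exact ⟨smul_mem_smul_finset hx, hxy ▸ smul_mem_smul_finset hy⟩
  · simp only [mem_filter, mem_product]
    rintro ⟨x, y⟩ ⟨-, hxy⟩ ⟨z, w⟩ ⟨-, hzw⟩ hxz
    exact Prod.ext (mul_left_cancel₀ ha hxz)
      (mul_left_cancel₀ ha' (hxy.symm.trans (hxz.trans hzw)))
  · simp only [mem_inter, mem_smul_finset, smul_eq_mul]
    rintro _ ⟨⟨x, hx, rfl⟩, y, hy, hxy⟩
    exact ⟨(x, y), by simp [hx, hy, hxy], rfl⟩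

lemma mulEnergy_eq_sum_card_smul_inter_smul (h0 : (0 : α) ∉ A) :
    mulEnergy A B = ∑ a ∈ A, ∑ a' ∈ A, #(a • B ∩ a' • B) := by
  rw [mulEnergy, card_filter, sum_product, sum_product]
  refine sum_congr rfl fun a ha ↦ sum_congr rfl fun a' ha' ↦ ?_
  rw [← card_filter]
  exact card_filter_mul_eq_mul (ne_of_mem_of_not_mem ha h0) (ne_of_mem_of_not_mem ha' h0)

lemma exists_card_mul_card_le_sum_card_smul_inter_smul (hA : A.Nonempty) (hB : B.Nonempty)
    (h0 : (0 : α) ∉ A) {K : ℝ} (hK : (#(A * B) : ℝ) ≤ K * #B) :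
    ∃ t ∈ A, (#B * #A : ℝ) ≤ K * ∑ a ∈ A, (#(t • B ∩ a • B) : ℝ) := by
  have hBpos : (0 : ℝ) < #B := mod_cast hB.card_pos
  refine exists_le_of_sum_le hA ?_
  rw [sum_const, nsmul_eq_mul, ← mul_sum]
  refine le_of_mul_le_mul_left ?_ hBpos
  calc (#B : ℝ) * (#A * (#B * #A)) = (#A ^ 2 * #B ^ 2 : ℕ) := by push_cast; ring
    _ ≤ (#(A * B) * mulEnergy A B : ℕ) := mod_cast le_card_mul_mul_mulEnergy A B
    _ = #(A * B) * ∑ t ∈ A, ∑ a ∈ A, (#(t • B ∩ a • B) : ℝ) := by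
        rw [mulEnergy_eq_sum_card_smul_inter_smul h0]
        push_cast
        rfl
    _ ≤ K * #B * ∑ t ∈ A, ∑ a ∈ A, (#(t • B ∩ a • B) : ℝ) := by gcongr
    _ = #B * (K * ∑ t ∈ A, ∑ a ∈ A, (#(t • B ∩ a • B) : ℝ)) := by ring

lemma exists_popular_dilates (hA : A.Nonempty) (hB : B.Nonempty) (h0 : (0 : α) ∉ A) {K : ℝ}
    (hK : (#(A * B) : ℝ) ≤ K * #B) :
    ∃ t ∈ A, ∃ P ⊆ A, (#A : ℝ) ≤ 2 * K * #P ∧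
      ∀ a ∈ P, (#B : ℝ) ≤ 2 * K * #(a • B ∩ t • B) := by
  have hBpos : (0 : ℝ) < #B := mod_cast hB.card_pos
  have hK0 : 0 ≤ K := nonneg_of_mul_nonneg_left ((Nat.cast_nonneg _).trans hK) hBpos
  obtain ⟨t, ht, hsum⟩ := exists_card_mul_card_le_sum_card_smul_inter_smul hA hB h0 hK
  have inter_le : ∀ a ∈ A, (#(t • B ∩ a • B) : ℝ) ≤ #B := fun a _ ↦
    mod_cast (card_le_card inter_subset_left).trans card_image_le
  refine ⟨t, ht, _, filter_subset _ _, card_le_two_mul_card_popular hK0 hBpos inter_le hsum, ?_⟩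
  intro a ha
  rw [inter_comm]
  exact (mem_filter.1 ha).2

end PopularDilates

section Covering

variable {G : Type*} [AddCommGroup G] {K L : ℝ}

lemma covByVAdd_add {A B C D : Set G} (hAB : CovByVAdd G K A B) (hCD : CovByVAdd G L C D) :
    CovByVAdd G (K * L) (A + C) (B + D) := by
  classical
  have hK := hAB.nonneg
  obtain ⟨X, hX, hAX⟩ := hAB
  obtain ⟨Y, hY, hCY⟩ := hCD
  refine ⟨X + Y, ?_, ?_⟩
  · calc (#(X + Y) : ℝ) ≤ #X * #Y := mod_cast card_add_le
      _ ≤ K * L := by gcongr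
  · rw [vadd_eq_add] at hAX hCY ⊢
    rw [coe_add, add_add_add_comm]
    exact Set.add_subset_add hAX hCY

lemma covByVAdd_neg {A B : Set G} (hAB : CovByVAdd G K A B) : CovByVAdd G K (-A) (-B) := by
  classical
  obtain ⟨X, hX, hAX⟩ := hAB
  refine ⟨-X, by rwa [card_neg], ?_⟩
  rw [vadd_eq_add] at hAX ⊢
  rw [coe_neg, ← neg_add]
  exact Set.neg_subset_neg.2 hAX

lemma covByVAdd_sub {A B C D : Set G} (hAB : CovByVAdd G K A B) (hCD : CovByVAdd G L C D) :
    CovByVAdd G (K * L) (A - C) (B - D) := by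
  simpa only [sub_eq_add_neg] using covByVAdd_add hAB (covByVAdd_neg hCD)

lemma card_le_mul_card_of_covByVAdd {S T : Finset G} (hST : CovByVAdd G K (S : Set G) T) :
    (#S : ℝ) ≤ K * #T := by
  classical
  obtain ⟨X, hX, hSX⟩ := hST
  rw [vadd_eq_add, ← coe_add, coe_subset] at hSX
  calc (#S : ℝ) ≤ #X * #T := mod_cast (card_le_card hSX).trans card_add_le
    _ ≤ K * #T := by gcongr

lemma covByVAdd_sub_of_card_le_card_inter [DecidableEq G] {S T : Finset G} (hT : T.Nonempty)
    (hSS : (#(S + S) : ℝ) ≤ K * #T) (hTT : (#(T + T) : ℝ) ≤ K * #T)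
    (hST : (#T : ℝ) ≤ L * #(S ∩ T)) : CovByVAdd G (K ^ 2 * L) (S : Set G) (T - T) := by
  have hTpos : (0 : ℝ) < #T := mod_cast hT.card_pos
  have hL : 0 ≤ L := (pos_of_mul_pos_left (hTpos.trans_le hST) (Nat.cast_nonneg _)).le
  have add_inter : (#(S + S ∩ T) : ℝ) ≤ K * #T :=
    le_trans (mod_cast card_le_card (add_subset_add_left inter_subset_left)) hSS
  have inter_add : (#(S ∩ T + T) : ℝ) ≤ K * #T :=
    le_trans (mod_cast card_le_card (add_subset_add_right inter_subset_right)) hTT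
  have card_add : (#(S + T) : ℝ) ≤ K ^ 2 * L * #T := by
    refine le_of_mul_le_mul_right ?_ hTpos
    calc (#(S + T) : ℝ) * #T ≤ #(S + T) * (L * #(S ∩ T)) := by gcongr
      _ = L * (#(S + T) * #(S ∩ T)) := by ring
      _ ≤ L * (#(S + S ∩ T) * #(S ∩ T + T)) := by
          gcongr L * ?_
          exact mod_cast ruzsa_triangle_inequality_add_add_add S (S ∩ T) T
      _ ≤ L * ((K * #T) * (K * #T)) := by
          gcongr
          exact (Nat.cast_nonneg _).trans add_inter
      _ = K ^ 2 * L * #T * #T := by ring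
  obtain ⟨X, -, hX, hSX⟩ := ruzsa_covering_add hT card_add
  exact ⟨X, hX, by exact_mod_cast hSX⟩

lemma card_nsmul_sub_nsmul_le [DecidableEq G] {A : Finset G} (hA : A.Nonempty)
    (hK : (#(A + A) : ℝ) ≤ K * #A) (m n : ℕ) :
    (#(m • A - n • A) : ℝ) ≤ K ^ (m + n) * #A := by
  have hApos : (0 : ℝ) < #A := mod_cast hA.card_pos
  have doubling_le : (#(A + A) / #A : ℝ) ≤ K := (div_le_iff₀ hApos).2 hK
  calc (#(m • A - n • A) : ℝ) ≤ (#(A + A) / #A) ^ (m + n) * #A := by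
        simpa using (NNRat.cast_le (K := ℝ)).2
          (pluennecke_ruzsa_inequality_nsmul_sub_nsmul_add hA A m n)
    _ ≤ K ^ (m + n) * #A := by gcongr

end Covering

section SmallDoubling

variable {F : Type*} [Field F] [DecidableEq F] {A : Finset F} {K L : ℝ} {a b c d t : F}

lemma covByVAdd_smul_of_card_le_card_inter (hA : A.Nonempty)
    (hK : (#(A + A) : ℝ) ≤ K * #A) (ht : t ≠ 0)
    (ha : (#A : ℝ) ≤ L * #(a • A ∩ t • A)) :
    CovByVAdd F (K ^ 2 * L) (a • (A : Set F)) (t • (A : Set F) - t • (A : Set F)) := by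
  have card_dilate : #(t • A) = #A := card_smul_finset₀ ht A
  have doubling_dilate (x : F) : (#(x • A + x • A) : ℝ) ≤ K * #(t • A) := by
    rw [card_dilate, ← smul_add]
    exact le_trans (mod_cast card_image_le) hK
  simpa using covByVAdd_sub_of_card_le_card_inter hA.smul_finset (doubling_dilate a)
    (doubling_dilate t) (by rwa [card_dilate])

lemma covByVAdd_sub_smul_of_card_le_card_inter (hA : A.Nonempty)
    (hK : (#(A + A) : ℝ) ≤ K * #A) (ht : t ≠ 0)
    (ha : (#A : ℝ) ≤ L * #(a • A ∩ t • A)) (hb : (#A : ℝ) ≤ L * #(b • A ∩ t • A)) :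
    CovByVAdd F ((K ^ 2 * L) ^ 2) ((a - b) • (A : Set F))
      ((t • (A : Set F) - t • (A : Set F)) - (t • (A : Set F) - t • (A : Set F))) := by
  have cov := covByVAdd_sub (G := F)
    (covByVAdd_smul_of_card_le_card_inter hA hK ht ha)
    (covByVAdd_smul_of_card_le_card_inter hA hK ht hb)
  rw [← sq] at cov
  refine cov.subset_left ?_
  rw [sub_eq_add_neg a, sub_eq_add_neg (a • (A : Set F)), ← Set.neg_smul_set]
  exact Set.add_smul_subset a (-b) (A : Set F)

lemma sub_sub_sub_add_add_eq_six_nsmul_sub {G : Type*} [SubtractionCommMonoid G] (T : G) :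
    ((T - T) - (T - T)) + ((T - T) - (T - T)) + ((T - T) - (T - T)) = 6 • T - 6 • T := by
  simp only [sub_eq_add_neg, neg_add, neg_neg, ← neg_nsmul]
  -- Here `-T` need not be an inverse of `T`, so `abel` has to see it as an atom.
  generalize -T = S
  abel

lemma card_sub_smul_add_add_le (hA : A.Nonempty) (hK : (#(A + A) : ℝ) ≤ K * #A) (ht : t ≠ 0)
    (ha : (#A : ℝ) ≤ L * #(a • A ∩ t • A)) (hb : (#A : ℝ) ≤ L * #(b • A ∩ t • A))
    (hc : (#A : ℝ) ≤ L * #(c • A ∩ t • A)) (hd : (#A : ℝ) ≤ L * #(d • A ∩ t • A)) :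
    (#((c - d) • A + (c - d) • A + (a - b) • A) : ℝ) ≤ K ^ 24 * L ^ 6 * #A := by
  have cov_cd := covByVAdd_sub_smul_of_card_le_card_inter hA hK ht hc hd
  have cov_ab := covByVAdd_sub_smul_of_card_le_card_inter hA hK ht ha hb
  have cov := covByVAdd_add (covByVAdd_add cov_cd cov_cd) cov_ab
  have doubling_dilate : (#(t • A + t • A) : ℝ) ≤ K * #(t • A) := by
    rwa [← smul_add, card_smul_finset₀ ht, card_smul_finset₀ ht]
  have card_le : (#((c - d) • A + (c - d) • A + (a - b) • A) : ℝ) ≤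
      (K ^ 2 * L) ^ 2 * (K ^ 2 * L) ^ 2 * (K ^ 2 * L) ^ 2 * #(6 • (t • A) - 6 • (t • A)) := by
    refine card_le_mul_card_of_covByVAdd ?_
    rw [← sub_sub_sub_add_add_eq_six_nsmul_sub]
    exact_mod_cast cov
  calc (#((c - d) • A + (c - d) • A + (a - b) • A) : ℝ)
      ≤ (K ^ 2 * L) ^ 2 * (K ^ 2 * L) ^ 2 * (K ^ 2 * L) ^ 2 * #(6 • (t • A) - 6 • (t • A)) :=
        card_le
    _ ≤ (K ^ 2 * L) ^ 2 * (K ^ 2 * L) ^ 2 * (K ^ 2 * L) ^ 2 * (K ^ (6 + 6) * #(t • A)) := by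
        gcongr
        exact card_nsmul_sub_nsmul_le hA.smul_finset doubling_dilate 6 6
    _ = K ^ 24 * L ^ 6 * #A := by
        rw [card_smul_finset₀ ht]
        ring

end SmallDoubling

section RealInequalities

lemma min_sq_le_sq_mul_min_sq {x y z C : ℝ} (hx : 0 ≤ x) (hz : 0 ≤ z) (hC : 1 ≤ C)
    (hxy : x ≤ C * y) : min (x ^ 2) z ≤ C ^ 2 * min (y ^ 2) z := by
  rw [mul_min_of_nonneg _ _ (sq_nonneg C), ← mul_pow]
  exact min_le_min (by gcongr) (le_mul_of_one_le_left hz (one_le_pow₀ hC))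

lemma rpow_one_add_min_le_min_sq {x y γ : ℝ} (hx : 1 ≤ x) (hy : 1 ≤ y) (hγ : 0 ≤ γ)
    (hxy : x ≤ y ^ (1 - γ)) : x ^ (1 + min γ 1) ≤ min (x ^ 2) y := by
  refine le_min ?_ ?_
  · rw [← Real.rpow_two]
    exact Real.rpow_le_rpow_of_exponent_le hx (by linarith [min_le_right γ 1])
  · calc x ^ (1 + min γ 1) ≤ x ^ (1 + γ) :=
          Real.rpow_le_rpow_of_exponent_le hx (by linarith [min_le_left γ 1])
      _ ≤ (y ^ (1 - γ)) ^ (1 + γ) := by gcongr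
      _ = y ^ ((1 - γ) * (1 + γ)) := (Real.rpow_mul (by linarith) _ _).symm
      _ ≤ y ^ (1 : ℝ) := Real.rpow_le_rpow_of_exponent_le hy (by nlinarith)
      _ = y := Real.rpow_one y

lemma rpow_one_add_div_pow_eq {x : ℝ} (hx : 0 < x) (g : ℝ) (n : ℕ) :
    (x ^ (1 + g / (n + 1))) ^ (n + 1) = x ^ (1 + g) * x ^ n := by
  rw [← Real.rpow_natCast, ← Real.rpow_natCast, ← Real.rpow_mul hx.le, ← Real.rpow_add hx]
  congr 1
  push_cast
  field_simp
  ring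

end RealInequalities

section SumProduct

variable {p : ℕ} [Fact p.Prime] {A : Finset (ZMod p)}

lemma min_sq_card_le_of_zero_notMem (hA : A.Nonempty) (h0 : 0 ∉ A) {K : ℝ}
    (hadd : (#(A + A) : ℝ) ≤ K * #A) (hmul : (#(A * A) : ℝ) ≤ K * #A) :
    min ((#A : ℝ) ^ 2) p ≤ 2 ^ 9 * K ^ 32 * #A := by
  have hApos : (0 : ℝ) < #A := mod_cast hA.card_pos
  have hK : 1 ≤ K := by
    refine le_of_mul_le_mul_right ?_ hApos
    rw [one_mul]
    exact le_trans (mod_cast card_le_card_add_left hA) hadd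
  obtain ⟨t, ht, B, hBA, hAB, hpop⟩ := exists_popular_dilates hA hA h0 hmul
  have ht0 : t ≠ 0 := ne_of_mem_of_not_mem ht h0
  have hB : B.Nonempty := by
    rw [nonempty_iff_ne_empty]
    rintro rfl
    simp [hA.ne_empty] at hAB
  obtain ⟨a, ha, b, hb, c, hc, d, hd, hpivot⟩ := exists_min_sq_card_le_card_sub_smul hB
  have hsub : (c - d) • B + (c - d) • B + (a - b) • B ⊆
      (c - d) • A + (c - d) • A + (a - b) • A := by gcongr
  calc min ((#A : ℝ) ^ 2) p
      ≤ (2 * K) ^ 2 * min ((#B : ℝ) ^ 2) p :=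
        min_sq_le_sq_mul_min_sq hApos.le (Nat.cast_nonneg p) (by linarith) hAB
    _ ≤ (2 * K) ^ 2 * (2 * #((c - d) • B + (c - d) • B + (a - b) • B)) := by
        gcongr
        exact_mod_cast hpivot
    _ ≤ (2 * K) ^ 2 * (2 * #((c - d) • A + (c - d) • A + (a - b) • A)) := by gcongr
    _ ≤ (2 * K) ^ 2 * (2 * (K ^ 24 * (2 * K) ^ 6 * #A)) := by
        gcongr
        exact card_sub_smul_add_add_le hA hadd ht0 (hpop a ha) (hpop b hb) (hpop c hc) (hpop d hd)
    _ = 2 ^ 9 * K ^ 32 * #A := by ring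

lemma min_sq_card_mul_pow_le_of_zero_notMem (hA : A.Nonempty) (h0 : 0 ∉ A) {M : ℝ}
    (hadd : (#(A + A) : ℝ) ≤ M) (hmul : (#(A * A) : ℝ) ≤ M) :
    min ((#A : ℝ) ^ 2) p * #A ^ 31 ≤ 2 ^ 9 * M ^ 32 := by
  have hApos : (0 : ℝ) < #A := mod_cast hA.card_pos
  have hM : M / #A * #A = M := div_mul_cancel₀ M hApos.ne'
  calc min ((#A : ℝ) ^ 2) p * #A ^ 31 ≤ 2 ^ 9 * (M / #A) ^ 32 * #A * #A ^ 31 := by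
        gcongr
        exact min_sq_card_le_of_zero_notMem hA h0 (by rwa [hM]) (by rwa [hM])
    _ = 2 ^ 9 * (M / #A * #A) ^ 32 := by ring
    _ = 2 ^ 9 * M ^ 32 := by rw [hM]

lemma min_sq_card_mul_pow_le (hA : A.Nonempty) {M : ℝ} (hadd : (#(A + A) : ℝ) ≤ M)
    (hmul : (#(A * A) : ℝ) ≤ M) :
    min ((#A : ℝ) ^ 2) p * #A ^ 31 ≤ 2 ^ 42 * M ^ 32 := by
  have card_le : (#A : ℝ) ≤ M := le_trans (mod_cast card_le_card_add_left hA) hadd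
  obtain ⟨x, rfl⟩ | hA' := hA.exists_eq_singleton_or_nontrivial
  · have hM : 1 ≤ M ^ 32 := one_le_pow₀ (by simpa using card_le)
    have hmin : min ((#{x} : ℝ) ^ 2) p ≤ 1 := (min_le_left _ _).trans (by simp)
    simp only [card_singleton, Nat.cast_one, one_pow, mul_one] at hmin ⊢
    linarith
  have erase_nonempty : (A.erase 0).Nonempty := hA'.erase_nonempty
  have hsub : A.erase 0 ⊆ A := erase_subset 0 A
  have card_le_two_mul : (#A : ℝ) ≤ 2 * #(A.erase 0) := by
    have := pred_card_le_card_erase (s := A) (a := 0)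
    have := erase_nonempty.card_pos
    exact_mod_cast (by omega : #A ≤ 2 * #(A.erase 0))
  calc min ((#A : ℝ) ^ 2) p * #A ^ 31
      ≤ 2 ^ 2 * min ((#(A.erase 0) : ℝ) ^ 2) p * (2 * #(A.erase 0)) ^ 31 := by
        gcongr
        exact min_sq_le_sq_mul_min_sq (Nat.cast_nonneg _) (Nat.cast_nonneg p) one_le_two
          card_le_two_mul
    _ = 2 ^ 33 * (min ((#(A.erase 0) : ℝ) ^ 2) p * #(A.erase 0) ^ 31) := by ring
    _ ≤ 2 ^ 33 * (2 ^ 9 * M ^ 32) := by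
        gcongr 2 ^ 33 * ?_
        refine min_sq_card_mul_pow_le_of_zero_notMem erase_nonempty (notMem_erase 0 A) ?_ ?_
        · exact le_trans (mod_cast card_le_card (add_subset_add hsub hsub)) hadd
        · exact le_trans (mod_cast card_le_card (mul_subset_mul hsub hsub)) hmul
    _ = 2 ^ 42 * M ^ 32 := by ring

end SumProduct

/-- Sum-product theorem of Bourgain–Katz–Tao: for every `γ > 0` there exist `δ > 0` and
`c > 0` such that for every prime `p` and every nonempty `A ⊆ 𝔽_p` with `|A| ≤ p^{1-γ}`,
one has `max(|A+A|, |A·A|) ≥ c·|A|^{1+δ}`. -/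
theorem sum_product_bourgain_katz_tao :
    ∀ γ : ℝ, 0 < γ →
      ∃ δ : ℝ, 0 < δ ∧ ∃ c : ℝ, 0 < c ∧
        ∀ (p : ℕ) [Fact p.Prime],
          ∀ A : Finset (ZMod p), A.Nonempty → (A.card : ℝ) ≤ (p : ℝ) ^ ((1 : ℝ) - γ) →
            c * (A.card : ℝ) ^ ((1 : ℝ) + δ) ≤ (max (A + A).card (A * A).card : ℝ) := by
  intro γ hγ
  have hδ : 0 < min γ 1 / 32 := div_pos (lt_min hγ one_pos) (by norm_num)
  refine ⟨min γ 1 / 32, hδ, 1 / 4, by norm_num, fun p _ A hA hAp ↦ ?_⟩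
  set M : ℝ := max (#(A + A) : ℝ) (#(A * A) : ℝ)
  have hA1 : (1 : ℝ) ≤ #A := mod_cast hA.card_pos
  have hp1 : (1 : ℝ) ≤ p := mod_cast (Fact.out : p.Prime).one_le
  refine le_of_pow_le_pow_left₀ (n := 32) (by norm_num) (by positivity) ?_
  calc (1 / 4 * (#A : ℝ) ^ (1 + min γ 1 / 32)) ^ 32
      = (1 / 4) ^ 32 * ((#A : ℝ) ^ (1 + min γ 1) * #A ^ 31) := by
        rw [mul_pow, ← rpow_one_add_div_pow_eq (by positivity)]
        norm_num
    _ ≤ (1 / 4) ^ 32 * (min ((#A : ℝ) ^ 2) p * #A ^ 31) := by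
        gcongr
        exact rpow_one_add_min_le_min_sq hA1 hp1 hγ.le hAp
    _ ≤ (1 / 4) ^ 32 * (2 ^ 42 * M ^ 32) := by
        gcongr (1 / 4) ^ 32 * ?_
        exact min_sq_card_mul_pow_le hA (le_max_left _ _) (le_max_right _ _)
    _ ≤ M ^ 32 := by
        have : 0 ≤ M ^ 32 := by positivity
        linarith
end

section
/- Let p be a prime and let ρ: 𝔽_p → ℝ be a probability density (ρ ≥ 0, ∑_{x∈𝔽_p} ρ(x) = 1). Define ρ_Y(y) = ∑_{x∈𝔽_p} ρ(x)ρ(x−y) for y ∈ 𝔽_p. Let α ≥ 1 be a real number such that ∑_{x∈𝔽_p} ∑_{y∈𝔽_p} ρ(x)·ρ_Y(y)·ρ_Y(xy) ≥ ρ_Y(0)/α (where xy is the product in 𝔽_p). Assume moreover that ρ(0) ≤ 1/(4α) and ρ_Y(0) ≤ 1/(4α). Then there exists a subset A ⊆ 𝔽_p \ {0} such that 1/(2³¹·α¹⁰·ρ_Y(0)) ≤ |A| ≤ 8α/ρ_Y(0) and max(|A+A|, |A·A|) ≤ 2⁸⁷⁸·α²⁹⁴·|A|. -/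
open scoped Pointwise

/-!
Normalise `W = ρ_Y / ρ_Y(0)`, so that `0 ≤ W ≤ 1 = W(0)` and `∑ W = 1 / ρ_Y(0) =: N`. The bounds on
`ρ(0)` and `ρ_Y(0)` make the terms of `∑ ρ(x) W(y) W(xy)` with `xy = 0` negligible, and so are those
where `W(y)` or `W(xy)` is below `1 / (8α)`. What remains is the correlation of `ρ`, whose square
sum is `1 / N`, with the weighted number of representations of `x` as a quotient of two elements of
the level set `{W ≥ 1 / (8α)}`. By Cauchy–Schwarz this level set has weighted multiplicative energy
of order `N³`, and the Balog–Szemerédi–Gowers theorem, run with the weights `W`, gives a large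
subset `B` with small quotient set.

Since `ρ_Y ≥ ρ_Y(0) / (8α)` on `B`, two applications of Cauchy–Schwarz show that `B` also has large
additive energy, so a second application of the theorem gives a large `A ⊆ B` with small difference
set. Ruzsa's triangle inequality turns small quotient and difference sets into small product sets
and sumsets, and `A·A ⊆ B·B`.
-/

open Finset

section Markov

variable {ι : Type*} (s : Finset ι) {f : ι → ℝ}

lemma card_mul_le_sum_of_forall_le {t C : ℝ} (hf : ∀ i ∈ s, t ≤ f i) (hs : ∑ i ∈ s, f i ≤ C) :
    #s * t ≤ C := by
  simpa only [nsmul_eq_mul] using (s.card_nsmul_le_sum f t hf).trans hs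

lemma sum_le_sum_filter_le_add {w : ι → ℝ} {t : ℝ} (hw : ∀ i ∈ s, 0 ≤ w i)
    (hf : ∀ i ∈ s, 0 ≤ f i) (ht : 0 < t) :
    ∑ i ∈ s, w i ≤ ∑ i ∈ s with f i ≤ t, w i + (∑ i ∈ s, w i * f i) / t := by
  rw [sum_filter, sum_div, ← sum_add_distrib]
  refine sum_le_sum fun i hi => ?_
  split_ifs with hft
  · exact le_add_of_nonneg_right (by have := hw i hi; have := hf i hi; positivity)
  · rw [zero_add, le_div_iff₀ ht]
    exact mul_le_mul_of_nonneg_left (not_le.1 hft).le (hw i hi)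

lemma sum_sq_le_mul_sum_filter_add {t B : ℝ} (hf0 : ∀ i ∈ s, 0 ≤ f i) (hfB : ∀ i ∈ s, f i ≤ B)
    (ht : 0 ≤ t) :
    ∑ i ∈ s, f i ^ 2 ≤ B * ∑ i ∈ s with t ≤ f i, f i + t * ∑ i ∈ s, f i := by
  rw [sum_filter, mul_sum, mul_sum, ← sum_add_distrib]
  refine sum_le_sum fun i hi => ?_
  have := hf0 i hi
  split_ifs with htf
  · rw [sq]
    exact le_add_of_le_of_nonneg (mul_le_mul_of_nonneg_right (hfB i hi) this) (by positivity)
  · rw [sq, mul_zero, zero_add]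
    exact mul_le_mul_of_nonneg_right (not_le.1 htf).le this

end Markov

section BipartiteGraph

variable {U V : Type*} (S : Finset U) (T : Finset V) (u : U → ℝ) (v : V → ℝ)
  (G : U → V → Prop) [DecidableRel G]

/-- The neighbours in `S` of a right vertex `z` of the bipartite graph `G`. -/
def leftNbrs (z : V) : Finset U := {x ∈ S | G x z}

/-- The common neighbours in `T` of two left vertices `x`, `y` of the bipartite graph `G`. -/
def commonNbrs (x y : U) : Finset V := {z ∈ T | G x z ∧ G y z}

/-- The neighbours `y` of `z` that are poorly connected to `x`: the common neighbours of `x` and `y`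
have total weight less than `ε`. -/
noncomputable def poorNbrs (ε : ℝ) (z : V) (x : U) : Finset U :=
  {y ∈ leftNbrs S G z | ∑ t ∈ commonNbrs T G x y, v t < ε}

/-- The neighbours of `z` that are poorly connected to at most a quarter, by weight, of the
neighbours of `z`. This is the set extracted by the Balog–Szemerédi–Gowers argument. -/
noncomputable def richNbrs (ε : ℝ) (z : V) : Finset U :=
  {x ∈ leftNbrs S G z | ∑ y ∈ poorNbrs S T v G ε z x, u y ≤ (∑ y ∈ leftNbrs S G z, u y) / 4}

/-- The weight of the pairs of neighbours of `z` that are poorly connected to each other. -/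
noncomputable def poorPairWeight (ε : ℝ) (z : V) : ℝ :=
  ∑ x ∈ leftNbrs S G z, u x * ∑ y ∈ poorNbrs S T v G ε z x, u y

variable {S T u v G} {ε : ℝ}

lemma poorPairWeight_nonneg (hu : ∀ x ∈ S, 0 ≤ u x) (z : V) :
    0 ≤ poorPairWeight S T u v G ε z :=
  sum_nonneg fun x hx => mul_nonneg (hu x (mem_filter.1 hx).1) <|
    sum_nonneg fun y hy => hu y (mem_filter.1 (mem_filter.1 hy).1).1

lemma sum_mul_poorPairWeight_le (hu : ∀ x ∈ S, 0 ≤ u x) (hε : 0 ≤ ε) :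
    ∑ z ∈ T, v z * poorPairWeight S T u v G ε z ≤ ε * (∑ x ∈ S, u x) ^ 2 := by
  have swap : ∑ z ∈ T, v z * poorPairWeight S T u v G ε z =
      ∑ x ∈ S, ∑ y ∈ S, u x * u y *
        if ∑ t ∈ commonNbrs T G x y, v t < ε then ∑ t ∈ commonNbrs T G x y, v t else 0 := by
    simp only [poorPairWeight, poorNbrs, leftNbrs, filter_filter, sum_filter, mul_sum]
    rw [sum_comm]
    refine sum_congr rfl fun x _ => ?_
    simp only [ite_sum_zero, mul_sum]
    rw [sum_comm]
    refine sum_congr rfl fun y _ => ?_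
    by_cases hpoor : ∑ t ∈ commonNbrs T G x y, v t < ε
    · simp only [hpoor, and_true, if_true]
      rw [commonNbrs, sum_filter]
      refine sum_congr rfl fun z _ => ?_
      by_cases hx : G x z <;> by_cases hy : G y z <;> simp [hx, hy, mul_comm]
    · simp [hpoor]
  rw [swap, sq, sum_mul_sum, mul_sum]
  refine sum_le_sum fun x hx => ?_
  rw [mul_sum]
  refine sum_le_sum fun y hy => ?_
  rw [mul_comm ε]
  refine mul_le_mul_of_nonneg_left ?_ (mul_nonneg (hu x hx) (hu y hy))
  split_ifs with hpoor
  exacts [hpoor.le, hε]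

lemma sum_mul_sum_leftNbrs :
    ∑ z ∈ T, v z * ∑ x ∈ leftNbrs S G z, u x = ∑ x ∈ S, ∑ z ∈ T with G x z, u x * v z := by
  simp only [leftNbrs, sum_filter, mul_sum]
  rw [sum_comm]
  refine sum_congr rfl fun x _ => sum_congr rfl fun z _ => ?_
  rw [mul_ite, mul_zero, mul_comm]

variable {κ M N : ℝ}

lemma le_sum_mul_sq_sum_leftNbrs (hv : ∀ z ∈ T, 0 ≤ v z) (hκ : 0 < κ) (hM : 0 < M) (hN : 0 < N)
    (hvN : ∑ z ∈ T, v z ≤ N)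
    (hG : κ * M * N ≤ ∑ x ∈ S, ∑ z ∈ T with G x z, u x * v z) :
    κ ^ 2 * M ^ 2 * N ≤ ∑ z ∈ T, v z * (∑ x ∈ leftNbrs S G z, u x) ^ 2 := by
  set deg : V → ℝ := fun z => ∑ x ∈ leftNbrs S G z, u x
  have cauchySchwarz : (∑ z ∈ T, v z * deg z) ^ 2 ≤ (∑ z ∈ T, v z) * ∑ z ∈ T, v z * deg z ^ 2 :=
    sum_sq_le_sum_mul_sum_of_sq_le_mul _ hv (fun z hz => mul_nonneg (hv z hz) (sq_nonneg _))
      fun z _ => le_of_eq (by ring)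
  have hnonneg : 0 ≤ ∑ z ∈ T, v z * deg z ^ 2 :=
    sum_nonneg fun z hz => mul_nonneg (hv z hz) (sq_nonneg _)
  refine le_of_mul_le_mul_left ?_ hN
  calc N * (κ ^ 2 * M ^ 2 * N) = (κ * M * N) ^ 2 := by ring
    _ ≤ (∑ z ∈ T, v z * deg z) ^ 2 := by
        rw [sum_mul_sum_leftNbrs]
        gcongr
    _ ≤ N * ∑ z ∈ T, v z * deg z ^ 2 := cauchySchwarz.trans (by gcongr)

-- Choosing `z` at random with weight `v`, the second moment of the degree beats the expected
-- weight of poorly connected pairs.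
lemma exists_large_leftNbrs_small_poorPairWeight (hu : ∀ x ∈ S, 0 ≤ u x) (hv : ∀ z ∈ T, 0 ≤ v z)
    (hκ : 0 < κ) (hM : 0 < M) (hN : 0 < N) (huM : ∑ x ∈ S, u x ≤ M) (hvN : ∑ z ∈ T, v z ≤ N)
    (hG : κ * M * N ≤ ∑ x ∈ S, ∑ z ∈ T with G x z, u x * v z) :
    ∃ z, 2 / 3 * (κ * M) ≤ ∑ x ∈ leftNbrs S G z, u x ∧
      16 * poorPairWeight S T u v G (κ ^ 2 * N / 64) z ≤ (∑ x ∈ leftNbrs S G z, u x) ^ 2 := by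
  set deg : V → ℝ := fun z => ∑ x ∈ leftNbrs S G z, u x
  set poor : V → ℝ := poorPairWeight S T u v G (κ ^ 2 * N / 64)
  have hpoor : ∑ z ∈ T, v z * poor z ≤ κ ^ 2 * N / 64 * M ^ 2 :=
    (sum_mul_poorPairWeight_le hu (by positivity)).trans <| by
      gcongr
      exact sum_nonneg hu
  have hdeg := le_sum_mul_sq_sum_leftNbrs hv hκ hM hN hvN hG
  obtain ⟨z, -, hz⟩ : ∃ z ∈ T, κ ^ 2 * M ^ 2 / 2 < deg z ^ 2 - 16 * poor z := by
    by_contra! hsmall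
    have hle : ∑ z ∈ T, v z * (deg z ^ 2 - 16 * poor z) ≤ N * (κ ^ 2 * M ^ 2 / 2) :=
      calc _ ≤ (∑ z ∈ T, v z) * (κ ^ 2 * M ^ 2 / 2) := by
            rw [sum_mul]
            exact sum_le_sum fun z hz => mul_le_mul_of_nonneg_left (hsmall z hz) (hv z hz)
        _ ≤ _ := by gcongr
    simp only [mul_sub, sum_sub_distrib, mul_left_comm _ (16 : ℝ), ← mul_sum] at hle
    have : 0 < κ ^ 2 * M ^ 2 * N := by positivity
    linarith
  have hpoor_nonneg : 0 ≤ poor z := poorPairWeight_nonneg hu z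
  have hdeg_nonneg : 0 ≤ deg z := sum_nonneg fun x hx => hu x (mem_filter.1 hx).1
  have hκM : 0 < κ ^ 2 * M ^ 2 := by positivity
  exact ⟨z, le_of_sq_le_sq (by linarith) hdeg_nonneg, by linarith⟩

lemma le_sum_richNbrs (hu : ∀ x ∈ S, 0 ≤ u x) {z : V} (hz : 0 < ∑ x ∈ leftNbrs S G z, u x)
    (hpoor : 16 * poorPairWeight S T u v G ε z ≤ (∑ x ∈ leftNbrs S G z, u x) ^ 2) :
    3 / 4 * ∑ x ∈ leftNbrs S G z, u x ≤ ∑ x ∈ richNbrs S T u v G ε z, u x := by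
  set deg : ℝ := ∑ x ∈ leftNbrs S G z, u x
  have hu' : ∀ x ∈ leftNbrs S G z, 0 ≤ u x := fun x hx => hu x (mem_filter.1 hx).1
  have markov : deg ≤ ∑ x ∈ richNbrs S T u v G ε z, u x +
      poorPairWeight S T u v G ε z / (deg / 4) :=
    sum_le_sum_filter_le_add _ hu'
      (fun x _ => sum_nonneg fun y hy => hu' y (mem_filter.1 hy).1) (by positivity)
  have : poorPairWeight S T u v G ε z / (deg / 4) ≤ deg / 4 := by
    rw [div_le_iff₀ (by positivity)]
    linarith
  linarith

-- A `w` poorly connected to neither `x` nor `y` is the midpoint of at least `ε ^ 2` paths of length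
-- four from `x` to `y`.
lemma le_sum_card_commonNbrs_mul (hu0 : ∀ x ∈ S, 0 ≤ u x) (hu1 : ∀ x ∈ S, u x ≤ 1)
    (hv1 : ∀ z ∈ T, v z ≤ 1) (hε : 0 ≤ ε) {z : V} {x y : U}
    (hx : x ∈ richNbrs S T u v G ε z) (hy : y ∈ richNbrs S T u v G ε z) :
    (∑ w ∈ leftNbrs S G z, u w) / 2 * ε ^ 2 ≤
      ∑ w ∈ S, (#(commonNbrs T G x w) * #(commonNbrs T G y w) : ℝ) := by
  classical
  set poor : U → Finset U := poorNbrs S T v G ε z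
  set R : Finset U := leftNbrs S G z \ (poor x ∪ poor y)
  have hRS : R ⊆ S := sdiff_subset.trans (filter_subset _ _)
  have hcard : (∑ w ∈ leftNbrs S G z, u w) / 2 ≤ #R := by
    have hcover : ∑ w ∈ leftNbrs S G z, u w ≤
        ∑ w ∈ R, u w + (∑ w ∈ poor x, u w + ∑ w ∈ poor y, u w) := by
      have hpoor : poor x ∪ poor y ⊆ leftNbrs S G z :=
        union_subset (filter_subset _ _) (filter_subset _ _)
      have hinter : 0 ≤ ∑ w ∈ poor x ∩ poor y, u w :=
        sum_nonneg fun w hw => hu0 w (mem_filter.1 (hpoor (inter_subset_union hw))).1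
      have hunion := sum_union_inter (s₁ := poor x) (s₂ := poor y) (f := u)
      rw [← sum_sdiff hpoor]
      linarith
    have hR : ∑ w ∈ R, u w ≤ #R := by
      simpa using sum_le_sum fun w hw => hu1 w (hRS hw)
    have := (mem_filter.1 hx).2
    have := (mem_filter.1 hy).2
    linarith
  have hcommon : ∀ x, ∀ w ∈ leftNbrs S G z, w ∉ poor x → ε ≤ #(commonNbrs T G x w) := by
    intro x w hw hwx
    have hrich : ε ≤ ∑ t ∈ commonNbrs T G x w, v t :=
      not_lt.1 fun h => hwx (mem_filter.2 ⟨hw, h⟩)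
    have hcard := sum_le_card_nsmul (commonNbrs T G x w) v 1 fun t ht => hv1 t (mem_filter.1 ht).1
    exact hrich.trans <| by simpa using hcard
  calc (∑ w ∈ leftNbrs S G z, u w) / 2 * ε ^ 2 ≤ #R * ε ^ 2 := by gcongr
    _ ≤ ∑ w ∈ R, (#(commonNbrs T G x w) * #(commonNbrs T G y w) : ℝ) := by
        refine card_mul_le_sum_of_forall_le R (fun w hw => ?_) le_rfl
        simp only [R, mem_sdiff, mem_union, not_or] at hw
        rw [sq]
        exact mul_le_mul (hcommon x w hw.1 hw.2.1) (hcommon y w hw.1 hw.2.2) hε (by positivity)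
    _ ≤ _ := sum_le_sum_of_subset_of_nonneg hRS fun _ _ _ => by positivity

theorem exists_subset_forall_le_sum_card_commonNbrs (hu0 : ∀ x ∈ S, 0 ≤ u x)
    (hu1 : ∀ x ∈ S, u x ≤ 1) (hv0 : ∀ z ∈ T, 0 ≤ v z) (hv1 : ∀ z ∈ T, v z ≤ 1)
    (hκ : 0 < κ) (hM : 0 < M) (hN : 0 < N) (huM : ∑ x ∈ S, u x ≤ M) (hvN : ∑ z ∈ T, v z ≤ N)
    (hG : κ * M * N ≤ ∑ x ∈ S, ∑ z ∈ T with G x z, u x * v z) :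
    ∃ A ⊆ S, κ * M / 2 ≤ ∑ x ∈ A, u x ∧ ∀ x ∈ A, ∀ y ∈ A,
      κ ^ 5 * M * N ^ 2 / 2 ^ 14 ≤
        ∑ w ∈ S, (#(commonNbrs T G x w) * #(commonNbrs T G y w) : ℝ) := by
  obtain ⟨z, hdeg, hpoor⟩ :=
    exists_large_leftNbrs_small_poorPairWeight hu0 hv0 hκ hM hN huM hvN hG
  have hκM : 0 < κ * M := by positivity
  refine ⟨richNbrs S T u v G (κ ^ 2 * N / 64) z, (filter_subset _ _).trans (filter_subset _ _),
    ?_, fun x hx y hy => ?_⟩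
  · linarith [le_sum_richNbrs hu0 (by linarith) hpoor]
  · calc κ ^ 5 * M * N ^ 2 / 2 ^ 14 = κ * M / 4 * (κ ^ 2 * N / 64) ^ 2 := by ring
      _ ≤ (∑ w ∈ leftNbrs S G z, u w) / 2 * (κ ^ 2 * N / 64) ^ 2 := by
          gcongr ?_ * _
          linarith
      _ ≤ _ := le_sum_card_commonNbrs_mul hu0 hu1 hv1 (by positivity) hx hy

end BipartiteGraph

section Group

variable {G : Type*} [Group G] [DecidableEq G]

/-- The number of representations `x = a / b` with `a, b ∈ S`, counted with weight `W a * W b`.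
Its square sum over `x` is the weighted multiplicative energy of `S`. The additive counterpart
`subRep` counts representations `x = a - b`. -/
@[to_additive]
def divRep (S : Finset G) (W : G → ℝ) (x : G) : ℝ :=
  ∑ q ∈ S ×ˢ S with q.1 / q.2 = x, W q.1 * W q.2

variable {S P : Finset G} {W : G → ℝ}

@[to_additive]
lemma divRep_nonneg (hW : ∀ a ∈ S, 0 ≤ W a) (x : G) : 0 ≤ divRep S W x :=
  sum_nonneg fun q hq => by
    obtain ⟨h₁, h₂⟩ := mem_product.1 (mem_filter.1 hq).1
    exact mul_nonneg (hW _ h₁) (hW _ h₂)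

@[to_additive]
lemma divRep_eq_sum_filter (x : G) :
    divRep S W x = ∑ b ∈ S with x * b ∈ S, W (x * b) * W b := by
  rw [divRep, sum_filter, sum_product_right, sum_filter]
  refine sum_congr rfl fun b _ => ?_
  simp only [div_eq_iff_eq_mul, sum_ite_eq']

@[to_additive]
lemma divRep_le_sum (hW0 : ∀ a ∈ S, 0 ≤ W a) (hW1 : ∀ a ∈ S, W a ≤ 1) (x : G) :
    divRep S W x ≤ ∑ a ∈ S, W a := by
  rw [divRep_eq_sum_filter]
  calc ∑ b ∈ S with x * b ∈ S, W (x * b) * W b ≤ ∑ b ∈ S with x * b ∈ S, W b :=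
        sum_le_sum fun b hb => by
          obtain ⟨hb, hxb⟩ := mem_filter.1 hb
          exact mul_le_of_le_one_left (hW0 b hb) (hW1 _ hxb)
    _ ≤ ∑ a ∈ S, W a := sum_le_sum_of_subset_of_nonneg (filter_subset _ _) fun a ha _ => hW0 a ha

@[to_additive sum_mul_subRep]
lemma sum_mul_divRep [Fintype G] (f : G → ℝ) :
    ∑ x, f x * divRep S W x = ∑ a ∈ S, ∑ b ∈ S, f (a / b) * (W a * W b) := by
  rw [← sum_product', ← sum_fiberwise (S ×ˢ S) fun q => q.1 / q.2]
  refine sum_congr rfl fun x _ => ?_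
  rw [divRep, mul_sum]
  refine sum_congr rfl fun q hq => ?_
  rw [(mem_filter.1 hq).2]

@[to_additive]
lemma sum_divRep (P : Finset G) :
    ∑ x ∈ P, divRep S W x = ∑ a ∈ S, ∑ b ∈ S with a / b ∈ P, W a * W b := by
  simp only [divRep]
  rw [sum_fiberwise_eq_sum_filter, sum_filter, sum_product]
  simp only [sum_filter]

@[to_additive]
lemma sum_divRep_le (hW : ∀ a ∈ S, 0 ≤ W a) (P : Finset G) :
    ∑ x ∈ P, divRep S W x ≤ (∑ a ∈ S, W a) ^ 2 := by
  rw [sum_divRep, sq, sum_mul_sum]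
  exact sum_le_sum fun a ha => sum_le_sum_of_subset_of_nonneg (filter_subset _ _)
    fun b hb _ => mul_nonneg (hW a ha) (hW b hb)

-- A path of length four with fixed ends is recovered from the quotients along its four edges, and
-- the quotient of its ends is the alternating product of those.
@[to_additive]
lemma sum_card_commonNbrs_le_card_filter_div (S P : Finset G) (y y' : G) :
    ∑ w ∈ S, #(commonNbrs S (· / · ∈ P) y w) * #(commonNbrs S (· / · ∈ P) y' w) ≤
      #{q ∈ (P ×ˢ P) ×ˢ P ×ˢ P | q.1.1 / q.1.2 * (q.2.1 / q.2.2) = y / y'} := by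
  simp only [← card_product, ← card_sigma]
  refine card_le_card_of_injOn
    (fun t => ((y / t.2.1, t.1 / t.2.1), (t.1 / t.2.2, y' / t.2.2))) ?_ ?_
  · rintro ⟨w, z, z'⟩ ht
    simp only [commonNbrs, coe_sigma, Set.mem_sigma_iff, mem_coe, mem_product, mem_filter] at ht
    simp only [coe_filter, mem_product, Set.mem_ofPred_eq, div_div_div_cancel_right,
      div_mul_div_cancel]
    exact ⟨⟨⟨ht.2.1.2.1, ht.2.1.2.2⟩, ht.2.2.2.2, ht.2.2.2.1⟩, trivial⟩
  · rintro ⟨w, z, z'⟩ - ⟨t, s, s'⟩ - heq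
    simp only [Prod.mk.injEq] at heq
    obtain ⟨⟨hz, hw⟩, hz', -⟩ := heq
    obtain rfl := div_right_injective hz
    obtain rfl := div_left_injective hw
    obtain rfl := div_right_injective hz'
    rfl

@[to_additive card_sub_mul_le_card_pow_four]
lemma card_div_mul_le_card_pow_four {A : Finset G} {t : ℝ}
    (hA : ∀ y ∈ A, ∀ y' ∈ A, t ≤ ∑ w ∈ S,
      (#(commonNbrs S (· / · ∈ P) y w) * #(commonNbrs S (· / · ∈ P) y' w) : ℝ)) :
    #(A / A) * t ≤ (#P : ℝ) ^ 4 := by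
  set Q : Finset ((G × G) × G × G) := (P ×ˢ P) ×ˢ P ×ˢ P
  have hfiber : ∑ x ∈ A / A, (#{q ∈ Q | q.1.1 / q.1.2 * (q.2.1 / q.2.2) = x} : ℝ) ≤ #P ^ 4 := by
    norm_cast
    rw [sum_card_fiberwise_eq_card_filter]
    refine (card_filter_le _ _).trans_eq ?_
    simp only [Q, card_product]
    ring
  refine card_mul_le_sum_of_forall_le (A / A) (fun x hx => ?_) hfiber
  obtain ⟨y, hy, y', hy', rfl⟩ := mem_div.1 hx
  exact (hA y hy y' hy').trans (by exact_mod_cast sum_card_commonNbrs_le_card_filter_div S P y y')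

variable {M K : ℝ} {X : Finset G}

@[to_additive]
lemma card_popular_divRep_le (hW : ∀ a ∈ S, 0 ≤ W a) (hM : 0 < M) (hK : 0 < K)
    (hWM : ∑ a ∈ S, W a ≤ M) : #{x ∈ X | M / (2 * K) ≤ divRep S W x} ≤ 2 * K * M := by
  have hsum : ∑ x ∈ X with M / (2 * K) ≤ divRep S W x, divRep S W x ≤ M ^ 2 :=
    (sum_divRep_le hW _).trans (pow_le_pow_left₀ (sum_nonneg hW) hWM 2)
  have hcard := card_mul_le_sum_of_forall_le _ (fun x hx => (mem_filter.1 hx).2) hsum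
  rw [← le_div_iff₀ (by positivity)] at hcard
  exact hcard.trans_eq (by field_simp)

@[to_additive]
lemma le_sum_popular_divRep (hW0 : ∀ a ∈ S, 0 ≤ W a) (hW1 : ∀ a ∈ S, W a ≤ 1) (hM : 0 < M)
    (hK : 0 < K) (hWM : ∑ a ∈ S, W a ≤ M) (hE : M ^ 3 / K ≤ ∑ x ∈ X, divRep S W x ^ 2) :
    M ^ 2 / (2 * K) ≤ ∑ x ∈ X with M / (2 * K) ≤ divRep S W x, divRep S W x := by
  have hsum : ∑ x ∈ X, divRep S W x ≤ M ^ 2 :=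
    (sum_divRep_le hW0 _).trans (pow_le_pow_left₀ (sum_nonneg hW0) hWM 2)
  have hsq := sum_sq_le_mul_sum_filter_add X (t := M / (2 * K)) (fun x _ => divRep_nonneg hW0 x)
    (fun x _ => (divRep_le_sum hW0 hW1 x).trans hWM) (by positivity)
  have hunpopular : M / (2 * K) * ∑ x ∈ X, divRep S W x ≤ M / (2 * K) * M ^ 2 := by gcongr
  refine le_of_mul_le_mul_left ?_ hM
  have : M ^ 3 / K - M / (2 * K) * M ^ 2 = M * (M ^ 2 / (2 * K)) := by field_simp; ring
  linarith

-- The Balog–Szemerédi–Gowers theorem, for weights.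
@[to_additive]
theorem exists_subset_card_div_le_of_energy (hW0 : ∀ a ∈ S, 0 ≤ W a) (hW1 : ∀ a ∈ S, W a ≤ 1)
    (hM : 0 < M) (hK : 0 < K) (hWM : ∑ a ∈ S, W a ≤ M)
    (hE : M ^ 3 / K ≤ ∑ x ∈ X, divRep S W x ^ 2) :
    ∃ A ⊆ S, M / (4 * K) ≤ ∑ a ∈ A, W a ∧ #(A / A) ≤ 2 ^ 23 * K ^ 9 * M := by
  set P : Finset G := {x ∈ X | M / (2 * K) ≤ divRep S W x}
  have hedges : 1 / (2 * K) * M * M ≤ ∑ a ∈ S, ∑ b ∈ S with a / b ∈ P, W a * W b := by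
    rw [← sum_divRep]
    exact (le_sum_popular_divRep hW0 hW1 hM hK hWM hE).trans_eq' (by ring)
  obtain ⟨A, hAS, hmass, hpaths⟩ := exists_subset_forall_le_sum_card_commonNbrs hW0 hW1 hW0 hW1
    (by positivity) hM hM hWM hWM hedges
  refine ⟨A, hAS, hmass.trans_eq' (by field_simp; norm_num), ?_⟩
  have hcard : (#(A / A) : ℝ) * ((1 / (2 * K)) ^ 5 * M * M ^ 2 / 2 ^ 14) ≤ (2 * K * M) ^ 4 :=
    (card_div_mul_le_card_pow_four hpaths).trans <|
      pow_le_pow_left₀ (by positivity) (card_popular_divRep_le hW0 hM hK hWM) 4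
  rw [← le_div_iff₀ (by positivity)] at hcard
  exact hcard.trans_eq (by field_simp)

end Group

@[to_additive card_add_le_sq_mul_of_card_sub_le]
lemma card_mul_le_sq_mul_of_card_div_le {G : Type*} [CommGroup G] [DecidableEq G] {A : Finset G}
    {C : ℝ} (hA : #(A / A) ≤ C * #A) : (#(A * A) : ℝ) ≤ C ^ 2 * #A := by
  obtain rfl | hne := A.eq_empty_or_nonempty
  · simp
  have hpos : (0 : ℝ) < #A := by exact_mod_cast hne.card_pos
  refine le_of_mul_le_mul_right ?_ hpos
  calc (#(A * A) : ℝ) * #A ≤ #(A / A) * #(A / A) := by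
        exact_mod_cast ruzsa_triangle_inequality_mul_div_div A A A
    _ ≤ C * #A * (C * #A) := mul_self_le_mul_self (by positivity) hA
    _ = C ^ 2 * #A * #A := by ring

section Autocorrelation

variable {G : Type*} [AddGroup G] [Fintype G]

/-- The autocorrelation of `ρ`: if `ρ` is the density of independent variables `X₁`, `X₂`, this is
the density of `X₁ - X₂`. -/
def autocorr (ρ : G → ℝ) (y : G) : ℝ := ∑ x, ρ x * ρ (x - y)

variable {ρ : G → ℝ}

lemma autocorr_zero (ρ : G → ℝ) : autocorr ρ 0 = ∑ x, ρ x ^ 2 := by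
  simp only [autocorr, sub_zero, sq]

lemma autocorr_nonneg (hρ : ∀ x, 0 ≤ ρ x) (y : G) : 0 ≤ autocorr ρ y :=
  sum_nonneg fun x _ => mul_nonneg (hρ x) (hρ (x - y))

lemma autocorr_zero_pos (hρ : ∑ x, ρ x ≠ 0) : 0 < autocorr ρ 0 := by
  obtain ⟨x, -, hx⟩ := exists_ne_zero_of_sum_ne_zero hρ
  rw [autocorr_zero]
  exact sum_pos' (fun _ _ => sq_nonneg _) ⟨x, mem_univ x, by positivity⟩

lemma sum_autocorr (ρ : G → ℝ) : ∑ y, autocorr ρ y = (∑ x, ρ x) ^ 2 := by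
  simp only [autocorr]
  rw [sum_comm, sq, sum_mul]
  refine sum_congr rfl fun x _ => ?_
  have hreflect : ∑ y, ρ (x - y) = ∑ y, ρ y := (Equiv.subLeft x).sum_comp ρ
  rw [← mul_sum, hreflect]

lemma autocorr_le_autocorr_zero (ρ : G → ℝ) (y : G) : autocorr ρ y ≤ autocorr ρ 0 := by
  have htranslate : ∑ x, ρ (x - y) ^ 2 = ∑ x, ρ x ^ 2 :=
    (Equiv.subRight y).sum_comp (fun x => ρ x ^ 2)
  have hamgm : 2 * autocorr ρ y ≤ ∑ x, ρ x ^ 2 + ∑ x, ρ (x - y) ^ 2 := by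
    rw [autocorr, mul_sum, ← sum_add_distrib]
    exact sum_le_sum fun x _ => by linarith [two_mul_le_add_sq (ρ x) (ρ (x - y))]
  rw [autocorr_zero]
  linarith

lemma card_le_of_le_autocorr (hρ0 : ∀ x, 0 ≤ ρ x) (hρ1 : ∑ x, ρ x = 1) {A : Finset G} {t : ℝ}
    (ht : 0 < t) (hA : ∀ a ∈ A, t ≤ autocorr ρ a) : #A ≤ 1 / t := by
  have hsum : ∑ a ∈ A, autocorr ρ a ≤ 1 := by
    simpa only [sum_autocorr, hρ1, one_pow] using
      sum_le_univ_sum_of_nonneg (s := A) (autocorr_nonneg hρ0)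
  exact (le_div_iff₀ ht).2 (card_mul_le_sum_of_forall_le A hA hsum)

lemma sum_sq_autocorr_le (hρ0 : ∀ x, 0 ≤ ρ x) (hρ1 : ∑ x, ρ x = 1) :
    ∑ y, autocorr ρ y ^ 2 ≤ autocorr ρ 0 :=
  calc ∑ y, autocorr ρ y ^ 2 ≤ ∑ y, autocorr ρ 0 * autocorr ρ y :=
        sum_le_sum fun y _ => by
          rw [sq]
          exact mul_le_mul_of_nonneg_right (autocorr_le_autocorr_zero ρ y) (autocorr_nonneg hρ0 y)
    _ = autocorr ρ 0 := by rw [← mul_sum, sum_autocorr, hρ1, one_pow, mul_one]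

lemma sum_translate_mul_translate (ρ : G → ℝ) (a b : G) :
    ∑ x, ρ (x - a) * ρ (x - b) = autocorr ρ (a - b) := by
  rw [autocorr, ← (Equiv.subRight b).sum_comp fun x => ρ x * ρ (x - (a - b))]
  refine sum_congr rfl fun x _ => ?_
  rw [Equiv.subRight_apply, sub_sub_sub_cancel_right, mul_comm]

variable [DecidableEq G]

lemma sum_sq_sum_translate (ρ : G → ℝ) (B : Finset G) :
    ∑ x, (∑ b ∈ B, ρ (x - b)) ^ 2 = ∑ x, autocorr ρ x * subRep B 1 x := by
  simp only [sum_mul_subRep, Pi.one_apply, mul_one, ← sum_translate_mul_translate, sq, sum_mul_sum]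
  rw [sum_comm]
  exact sum_congr rfl fun a _ => sum_comm

-- Cauchy–Schwarz twice, first against `ρ` and then against its autocorrelation.
lemma sum_autocorr_pow_four_le (hρ0 : ∀ x, 0 ≤ ρ x) (hρ1 : ∑ x, ρ x = 1) (B : Finset G) :
    (∑ b ∈ B, autocorr ρ b) ^ 4 ≤ autocorr ρ 0 ^ 3 * ∑ x, subRep B 1 x ^ 2 := by
  have hfirst : (∑ b ∈ B, autocorr ρ b) ^ 2 ≤
      autocorr ρ 0 * ∑ x, autocorr ρ x * subRep B 1 x := by
    have hswap : ∑ b ∈ B, autocorr ρ b = ∑ x, ρ x * ∑ b ∈ B, ρ (x - b) := by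
      simp only [autocorr, mul_sum]
      exact sum_comm
    rw [hswap, autocorr_zero, ← sum_sq_sum_translate]
    exact sum_mul_sq_le_sq_mul_sq _ _ _
  have hsecond : (∑ x, autocorr ρ x * subRep B 1 x) ^ 2 ≤
      autocorr ρ 0 * ∑ x, subRep B 1 x ^ 2 :=
    (sum_mul_sq_le_sq_mul_sq _ _ _).trans <|
      mul_le_mul_of_nonneg_right (sum_sq_autocorr_le hρ0 hρ1) (sum_nonneg fun _ _ => sq_nonneg _)
  calc (∑ b ∈ B, autocorr ρ b) ^ 4 = ((∑ b ∈ B, autocorr ρ b) ^ 2) ^ 2 := by ring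
    _ ≤ (autocorr ρ 0 * ∑ x, autocorr ρ x * subRep B 1 x) ^ 2 := by gcongr
    _ = autocorr ρ 0 ^ 2 * (∑ x, autocorr ρ x * subRep B 1 x) ^ 2 := by ring
    _ ≤ autocorr ρ 0 ^ 2 * (autocorr ρ 0 * ∑ x, subRep B 1 x ^ 2) := by gcongr
    _ = autocorr ρ 0 ^ 3 * ∑ x, subRep B 1 x ^ 2 := by ring

theorem exists_subset_card_sub_le_of_le_autocorr (hρ0 : ∀ x, 0 ≤ ρ x) (hρ1 : ∑ x, ρ x = 1)
    {B : Finset G} {τ c : ℝ} (hτ : 0 < τ) (hc : 0 < c)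
    (hB : ∀ b ∈ B, τ * autocorr ρ 0 ≤ autocorr ρ b) (hcard : c ≤ #B * autocorr ρ 0) :
    ∃ A ⊆ B, c * τ ^ 4 / 4 * #B ≤ #A ∧ #(A - A) ≤ 2 ^ 23 / (c * τ ^ 4) ^ 9 * #B := by
  have hβ : 0 < autocorr ρ 0 := autocorr_zero_pos (hρ1 ▸ one_ne_zero)
  have hBpos : (0 : ℝ) < #B := pos_of_mul_pos_left (hc.trans_le hcard) hβ.le
  have henergy : (#B : ℝ) ^ 3 / (1 / (c * τ ^ 4)) ≤ ∑ x, subRep B 1 x ^ 2 := by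
    refine le_of_mul_le_mul_left ?_ (pow_pos hβ 3)
    calc autocorr ρ 0 ^ 3 * ((#B : ℝ) ^ 3 / (1 / (c * τ ^ 4)))
          = autocorr ρ 0 ^ 3 * #B ^ 3 * τ ^ 4 * c := by field_simp
      _ ≤ autocorr ρ 0 ^ 3 * #B ^ 3 * τ ^ 4 * (#B * autocorr ρ 0) := by gcongr
      _ = (#B * (τ * autocorr ρ 0)) ^ 4 := by ring
      _ ≤ (∑ b ∈ B, autocorr ρ b) ^ 4 := by
          gcongr
          exact card_mul_le_sum_of_forall_le B hB le_rfl
      _ ≤ _ := sum_autocorr_pow_four_le hρ0 hρ1 B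
  obtain ⟨A, hAB, hA, hsub⟩ := exists_subset_card_sub_le_of_energy (W := 1)
    (fun _ _ => zero_le_one) (fun _ _ => le_rfl) hBpos (by positivity) (by simp) henergy
  refine ⟨A, hAB, ?_, hsub.trans_eq (by field_simp)⟩
  simp only [Pi.one_apply, sum_const, nsmul_one] at hA
  exact hA.trans_eq' (by field_simp)

end Autocorrelation

theorem exists_subset_card_add_le_of_le_autocorr {G : Type*} [AddCommGroup G] [Fintype G]
    [DecidableEq G] {ρ : G → ℝ} (hρ0 : ∀ x, 0 ≤ ρ x) (hρ1 : ∑ x, ρ x = 1) {α : ℝ} (hα : 0 < α)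
    {B : Finset G} (hBlevel : ∀ b ∈ B, 1 / (8 * α) * autocorr ρ 0 ≤ autocorr ρ b)
    (hB : 1 / (64 * α ^ 2) ≤ #B * autocorr ρ 0) :
    ∃ A ⊆ B, (#B : ℝ) ≤ 2 ^ 20 * α ^ 6 * #A ∧ #(A + A) ≤ 2 ^ 410 * α ^ 120 * #A := by
  obtain ⟨A, hAB, hA, hsub⟩ := exists_subset_card_sub_le_of_le_autocorr hρ0 hρ1
    (by positivity) (by positivity) hBlevel hB
  have hBA : (#B : ℝ) ≤ 2 ^ 20 * α ^ 6 * #A :=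
    calc (#B : ℝ) = 2 ^ 20 * α ^ 6 * (1 / (64 * α ^ 2) * (1 / (8 * α)) ^ 4 / 4 * #B) := by
          field_simp; ring
      _ ≤ 2 ^ 20 * α ^ 6 * #A := by gcongr
  have hdiff : (#(A - A) : ℝ) ≤ 2 ^ 205 * α ^ 60 * #A :=
    calc (#(A - A) : ℝ) ≤ 2 ^ 23 / (1 / (64 * α ^ 2) * (1 / (8 * α)) ^ 4) ^ 9 * #B := hsub
      _ = 2 ^ 185 * α ^ 54 * #B := by field_simp; norm_num
      _ ≤ 2 ^ 185 * α ^ 54 * (2 ^ 20 * α ^ 6 * #A) := by gcongr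
      _ = 2 ^ 205 * α ^ 60 * #A := by ring
  refine ⟨A, hAB, hBA, (card_add_le_sq_mul_of_card_sub_le hdiff).trans_eq ?_⟩
  rw [mul_pow, ← pow_mul, ← pow_mul]

section Correlation

variable {G : Type*} [Group G] [Fintype G] [DecidableEq G] {W μ : G → ℝ}

lemma sum_mul_translate_le_add_divRep (hW : ∀ x, 0 ≤ W x) {τ : ℝ} (hτ : 0 ≤ τ) (x : G) :
    ∑ y, W y * W (x * y) ≤ 2 * τ * ∑ y, W y + divRep {y | τ ≤ W y} W x := by
  have htranslate : ∑ y, W (x * y) = ∑ y, W y := Equiv.sum_comp (Equiv.mulLeft x) W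
  have hsplit : 2 * τ * ∑ y, W y + divRep {y | τ ≤ W y} W x = ∑ y, (τ * W y + τ * W (x * y) +
      if τ ≤ W y ∧ τ ≤ W (x * y) then W (x * y) * W y else 0) := by
    simp only [divRep_eq_sum_filter, mem_filter_univ, filter_filter, sum_filter, sum_add_distrib,
      ← mul_sum, htranslate]
    ring
  rw [hsplit]
  refine sum_le_sum fun y _ => ?_
  have hy := hW y
  have hxy := hW (x * y)
  split_ifs with hlarge
  · rw [mul_comm]
    exact le_add_of_nonneg_left (by positivity)
  · rw [add_zero]
    obtain hlt | hlt := not_and_or.1 hlarge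
    · exact (mul_le_mul_of_nonneg_right (not_le.1 hlt).le hxy).trans
        (le_add_of_nonneg_left (by positivity))
    · rw [mul_comm]
      exact (mul_le_mul_of_nonneg_right (not_le.1 hlt).le hy).trans
        (le_add_of_nonneg_right (by positivity))

variable {N α : ℝ}

lemma le_sum_mul_divRep_of_correlation (hμ0 : ∀ x, 0 ≤ μ x) (hμ1 : ∑ x, μ x ≤ 1)
    (hW : ∀ x, 0 ≤ W x) (hWN : ∑ x, W x ≤ N) (hN : 0 ≤ N) (hα : 0 < α)
    (hcorr : N / (2 * α) ≤ ∑ x, ∑ y, μ x * W y * W (x * y)) :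
    N / (4 * α) ≤ ∑ x, μ x * divRep {y | 1 / (8 * α) ≤ W y} W x := by
  have htrunc : ∑ x, ∑ y, μ x * W y * W (x * y) ≤
      N / (4 * α) + ∑ x, μ x * divRep {y | 1 / (8 * α) ≤ W y} W x :=
    calc ∑ x, ∑ y, μ x * W y * W (x * y)
        ≤ ∑ x, μ x * (N / (4 * α) + divRep {y | 1 / (8 * α) ≤ W y} W x) := by
          refine sum_le_sum fun x _ => ?_
          simp only [mul_assoc, ← mul_sum]
          refine mul_le_mul_of_nonneg_left ?_ (hμ0 x)
          refine (sum_mul_translate_le_add_divRep hW (τ := 1 / (8 * α)) (by positivity) x).trans ?_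
          gcongr ?_ + _
          calc 2 * (1 / (8 * α)) * ∑ y, W y ≤ 2 * (1 / (8 * α)) * N := by gcongr
            _ = N / (4 * α) := by ring
      _ = (∑ x, μ x) * (N / (4 * α)) + ∑ x, μ x * divRep {y | 1 / (8 * α) ≤ W y} W x := by
          simp only [mul_add, sum_add_distrib, sum_mul]
      _ ≤ _ := by
          gcongr ?_ + _
          exact mul_le_of_le_one_left (by positivity) hμ1
  have : N / (2 * α) = N / (4 * α) + N / (4 * α) := by ring
  linarith

theorem exists_finset_card_div_le_of_correlation (hμ0 : ∀ x, 0 ≤ μ x) (hμ1 : ∑ x, μ x ≤ 1)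
    (hμ2 : ∑ x, μ x ^ 2 ≤ 1 / N) (hW0 : ∀ x, 0 ≤ W x) (hW1 : ∀ x, W x ≤ 1)
    (hWN : ∑ x, W x ≤ N) (hN : 0 < N) (hα : 0 < α)
    (hcorr : N / (2 * α) ≤ ∑ x, ∑ y, μ x * W y * W (x * y)) :
    ∃ B : Finset G, (∀ b ∈ B, 1 / (8 * α) ≤ W b) ∧ N / (64 * α ^ 2) ≤ #B ∧
      #(B / B) ≤ 2 ^ 59 * α ^ 18 * N := by
  set S : Finset G := {y | 1 / (8 * α) ≤ W y}
  have henergy : N ^ 3 / (16 * α ^ 2) ≤ ∑ x, divRep S W x ^ 2 := by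
    refine le_of_mul_le_mul_left ?_ (one_div_pos.2 hN)
    calc 1 / N * (N ^ 3 / (16 * α ^ 2)) = (N / (4 * α)) ^ 2 := by field_simp; norm_num
      _ ≤ (∑ x, μ x * divRep S W x) ^ 2 := by
          gcongr
          exact le_sum_mul_divRep_of_correlation hμ0 hμ1 hW0 hWN hN.le hα hcorr
      _ ≤ (∑ x, μ x ^ 2) * ∑ x, divRep S W x ^ 2 := sum_mul_sq_le_sq_mul_sq _ _ _
      _ ≤ 1 / N * ∑ x, divRep S W x ^ 2 :=
          mul_le_mul_of_nonneg_right hμ2 (sum_nonneg fun _ _ => sq_nonneg _)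
  have hmass : ∑ x ∈ S, W x ≤ N :=
    (sum_le_sum_of_subset_of_nonneg (subset_univ S) fun x _ _ => hW0 x).trans hWN
  obtain ⟨B, hBS, hB, hdiv⟩ := exists_subset_card_div_le_of_energy (fun x _ => hW0 x)
    (fun x _ => hW1 x) hN (by positivity) hmass henergy
  refine ⟨B, fun b hb => (mem_filter.1 (hBS hb)).2, ?_, hdiv.trans_eq (by ring)⟩
  calc N / (64 * α ^ 2) = N / (4 * (16 * α ^ 2)) := by ring
    _ ≤ ∑ b ∈ B, W b := hB
    _ ≤ #B := by simpa using sum_le_card_nsmul B W 1 fun b _ => hW1 b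

end Correlation

section GroupWithZero

variable {K : Type*} [GroupWithZero K] [Fintype K] [DecidableEq K]

lemma sum_eq_apply_zero_add_sum_units (f : K → ℝ) : ∑ x, f x = f 0 + ∑ u : Kˣ, f u := by
  rw [Fintype.sum_eq_add_sum_subtype_ne f 0]
  exact congrArg _ (unitsEquivNeZero.sum_comp fun x : {x : K // x ≠ 0} => f x).symm

lemma sum_units_le_sum {f : K → ℝ} (hf : 0 ≤ f 0) : ∑ u : Kˣ, f u ≤ ∑ x, f x := by
  rw [sum_eq_apply_zero_add_sum_units f]
  exact le_add_of_nonneg_left hf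

lemma sum_mul_mul_eq_add_sum_units (ρ W : K → ℝ) :
    ∑ x, ∑ y, ρ x * W y * W (x * y) = ρ 0 * (∑ y, W y) * W 0 +
      ((∑ u : Kˣ, ρ u) * W 0 ^ 2 + ∑ u : Kˣ, ∑ v : Kˣ, ρ u * W v * W ↑(u * v)) := by
  rw [sum_eq_apply_zero_add_sum_units]
  congr 1
  · simp only [zero_mul, mul_sum, sum_mul]
  · rw [sum_mul, ← sum_add_distrib]
    refine sum_congr rfl fun u _ => ?_
    rw [sum_eq_apply_zero_add_sum_units, mul_zero, mul_assoc, sq]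
    simp only [Units.val_mul]

lemma le_sum_units_of_correlation {ρ W : K → ℝ} {N α : ℝ} (hρ0 : 0 ≤ ρ 0) (hρ1 : ∑ x, ρ x = 1)
    (hW0 : W 0 = 1) (hWN : ∑ x, W x = N) (hα : 0 < α) (hN : 4 * α ≤ N) (h0 : ρ 0 ≤ 1 / (4 * α))
    (hcorr : N / α ≤ ∑ x, ∑ y, ρ x * W y * W (x * y)) :
    N / (2 * α) ≤ ∑ u : Kˣ, ∑ v : Kˣ, ρ u * W v * W ↑(u * v) := by
  have hzero_left : ρ 0 * N ≤ N / (4 * α) :=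
    (mul_le_mul_of_nonneg_right h0 (by linarith)).trans_eq (one_div_mul_eq_div _ _)
  have hzero_right : ∑ u : Kˣ, ρ u ≤ N / (4 * α) :=
    (sum_units_le_sum hρ0).trans <| hρ1.trans_le <| (one_le_div (by positivity)).2 hN
  have hquarters : N / α = N / (4 * α) + N / (4 * α) + N / (2 * α) := by ring
  rw [sum_mul_mul_eq_add_sum_units, hW0, hWN] at hcorr
  linarith

end GroupWithZero

section FiniteField

variable {K : Type*} [Field K] [Fintype K] [DecidableEq K] {ρ : K → ℝ} {α : ℝ}

lemma exists_units_card_div_le_of_autocorr (hρ0 : ∀ x, 0 ≤ ρ x) (hρ1 : ∑ x, ρ x = 1)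
    (hα : 0 < α) (hcorr : autocorr ρ 0 / α ≤ ∑ x, ∑ y, ρ x * autocorr ρ y * autocorr ρ (x * y))
    (h0 : ρ 0 ≤ 1 / (4 * α)) (hβ : autocorr ρ 0 ≤ 1 / (4 * α)) :
    ∃ B : Finset Kˣ, (∀ b ∈ B, 1 / (8 * α) * autocorr ρ 0 ≤ autocorr ρ (b : K)) ∧
      1 / (64 * α ^ 2) ≤ #B * autocorr ρ 0 ∧ #(B / B) * autocorr ρ 0 ≤ 2 ^ 59 * α ^ 18 := by
  have hβpos : 0 < autocorr ρ 0 := autocorr_zero_pos (hρ1 ▸ one_ne_zero)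
  set β := autocorr ρ 0 with hβ_def
  set W : K → ℝ := fun x => autocorr ρ x / β
  have hW0 : ∀ x, 0 ≤ W x := fun x => div_nonneg (autocorr_nonneg hρ0 x) hβpos.le
  have hW1 : ∀ x, W x ≤ 1 := fun x => (div_le_one hβpos).2 (autocorr_le_autocorr_zero ρ x)
  have hWN : ∑ x, W x = 1 / β := by rw [← sum_div, sum_autocorr, hρ1, one_pow]
  have hρ2 : ∑ u : Kˣ, ρ u ^ 2 ≤ 1 / (1 / β) := by
    rw [one_div_one_div, hβ_def, autocorr_zero]
    exact sum_units_le_sum (f := fun x => ρ x ^ 2) (sq_nonneg _)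
  have hunits : 1 / β / (2 * α) ≤ ∑ u : Kˣ, ∑ v : Kˣ, ρ u * W v * W ↑(u * v) := by
    refine le_sum_units_of_correlation (hρ0 0) hρ1 (div_self hβpos.ne') hWN hα
      ((le_one_div hβpos (by positivity)).1 hβ) h0 ?_
    calc 1 / β / α = β / α / β ^ 2 := by field_simp
      _ ≤ (∑ x, ∑ y, ρ x * autocorr ρ y * autocorr ρ (x * y)) / β ^ 2 := by gcongr
      _ = ∑ x, ∑ y, ρ x * W y * W (x * y) := by
          simp only [sum_div]
          exact sum_congr rfl fun x _ => sum_congr rfl fun y _ => by ring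
  obtain ⟨B, hBW, hB, hdiv⟩ := exists_finset_card_div_le_of_correlation (fun u : Kˣ => hρ0 u)
    ((sum_units_le_sum (hρ0 0)).trans_eq hρ1) hρ2 (fun u => hW0 u) (fun u => hW1 u)
    ((sum_units_le_sum (hW0 0)).trans_eq hWN) (one_div_pos.2 hβpos) hα hunits
  refine ⟨B, fun b hb => (le_div_iff₀ hβpos).1 (hBW b hb), ?_, ?_⟩
  · rw [← div_le_iff₀ hβpos]
    exact hB.trans_eq' (div_right_comm _ _ _)
  · rw [← le_div_iff₀ hβpos]
    exact hdiv.trans_eq (mul_one_div _ _)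

theorem exists_finset_card_mul_le_of_autocorr (hρ0 : ∀ x, 0 ≤ ρ x) (hρ1 : ∑ x, ρ x = 1)
    (hα : 0 < α) (hcorr : autocorr ρ 0 / α ≤ ∑ x, ∑ y, ρ x * autocorr ρ y * autocorr ρ (x * y))
    (h0 : ρ 0 ≤ 1 / (4 * α)) (hβ : autocorr ρ 0 ≤ 1 / (4 * α)) :
    ∃ B : Finset K, 0 ∉ B ∧ (∀ b ∈ B, 1 / (8 * α) * autocorr ρ 0 ≤ autocorr ρ b) ∧
      1 / (64 * α ^ 2) ≤ #B * autocorr ρ 0 ∧ #(B * B) ≤ 2 ^ 130 * α ^ 40 * #B := by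
  obtain ⟨U, hUlevel, hU, hdiv⟩ := exists_units_card_div_le_of_autocorr hρ0 hρ1 hα hcorr h0 hβ
  have hβpos : 0 < autocorr ρ 0 := autocorr_zero_pos (hρ1 ▸ one_ne_zero)
  have hquot : (#(U / U) : ℝ) ≤ 2 ^ 65 * α ^ 20 * #U := by
    refine le_of_mul_le_mul_right ?_ hβpos
    calc #(U / U) * autocorr ρ 0 ≤ 2 ^ 59 * α ^ 18 := hdiv
      _ = 2 ^ 65 * α ^ 20 * (1 / (64 * α ^ 2)) := by field_simp; norm_num
      _ ≤ 2 ^ 65 * α ^ 20 * (#U * autocorr ρ 0) := by gcongr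
      _ = 2 ^ 65 * α ^ 20 * #U * autocorr ρ 0 := by ring
  have hcard (V : Finset Kˣ) : #(V.image (Units.coeHom K)) = #V :=
    card_image_of_injective V Units.val_injective
  refine ⟨U.image (Units.coeHom K), by simp, by simpa using hUlevel, by rwa [hcard], ?_⟩
  rw [← image_mul, hcard, hcard]
  exact (card_mul_le_sq_mul_of_card_div_le hquot).trans_eq (by ring)

theorem exists_set_with_small_sumset_and_productset_general (hρ0 : ∀ x, 0 ≤ ρ x)
    (hρ1 : ∑ x, ρ x = 1) (hα : 1 ≤ α)
    (hcorr : autocorr ρ 0 / α ≤ ∑ x, ∑ y, ρ x * autocorr ρ y * autocorr ρ (x * y))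
    (h0 : ρ 0 ≤ 1 / (4 * α)) (hβ : autocorr ρ 0 ≤ 1 / (4 * α)) :
    ∃ A : Finset K, 0 ∉ A ∧
      1 / (2 ^ 31 * α ^ 10 * autocorr ρ 0) ≤ #A ∧ #A ≤ 8 * α / autocorr ρ 0 ∧
      (max #(A + A) #(A * A) : ℝ) ≤ 2 ^ 878 * α ^ 294 * #A := by
  have hα0 : 0 < α := by linarith
  have hβpos : 0 < autocorr ρ 0 := autocorr_zero_pos (hρ1 ▸ one_ne_zero)
  obtain ⟨B, h0B, hBlevel, hB, hmul⟩ :=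
    exists_finset_card_mul_le_of_autocorr hρ0 hρ1 hα0 hcorr h0 hβ
  obtain ⟨A, hAB, hBA, hadd⟩ := exists_subset_card_add_le_of_le_autocorr hρ0 hρ1 hα0 hBlevel hB
  refine ⟨A, fun h0A => h0B (hAB h0A), ?_, ?_, max_le (hadd.trans ?_) ?_⟩
  · have hlarge : 1 / (64 * α ^ 2) ≤ 2 ^ 20 * α ^ 6 * #A * autocorr ρ 0 := hB.trans (by gcongr)
    rw [div_le_iff₀ (by positivity)] at hlarge ⊢
    calc 1 ≤ 2 ^ 26 * α ^ 8 * (#A * autocorr ρ 0) := by linarith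
      _ ≤ 2 ^ 31 * α ^ 10 * (#A * autocorr ρ 0) := by gcongr <;> norm_num
      _ = #A * (2 ^ 31 * α ^ 10 * autocorr ρ 0) := by ring
  · exact (card_le_of_le_autocorr hρ0 hρ1 (by positivity) fun a ha => hBlevel a (hAB ha)).trans_eq
      (by field_simp)
  · gcongr <;> norm_num
  · calc (#(A * A) : ℝ) ≤ #(B * B) := by gcongr
      _ ≤ 2 ^ 130 * α ^ 40 * #B := hmul
      _ ≤ 2 ^ 130 * α ^ 40 * (2 ^ 20 * α ^ 6 * #A) := by gcongr
      _ = 2 ^ 150 * α ^ 46 * #A := by ring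
      _ ≤ 2 ^ 878 * α ^ 294 * #A := by gcongr <;> norm_num

end FiniteField

/-- If `ρ` is a probability density on `𝔽_p`, `ρ_Y(y) = ∑_x ρ(x)ρ(x-y)`, `α ≥ 1` with
`E(ρ_Y(XY)) = ∑_{x,y} ρ(x)ρ_Y(y)ρ_Y(xy) ≥ ρ_Y(0)/α`, `ρ(0) ≤ 1/(4α)` and
`ρ_Y(0) ≤ 1/(4α)`, then there is `A ⊆ 𝔽_p \ {0}` with
`1/(2³¹α¹⁰ρ_Y(0)) ≤ |A| ≤ 8α/ρ_Y(0)` and `max(|A+A|,|A·A|) ≤ 2⁸⁷⁸·α²⁹⁴·|A|`. -/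
theorem exists_set_with_small_sumset_and_productset (p : ℕ) [Fact p.Prime]
    (ρ : ZMod p → ℝ) (hρ0 : ∀ x, 0 ≤ ρ x) (hρ1 : ∑ x, ρ x = 1)
    (ρY : ZMod p → ℝ) (hρY : ∀ y, ρY y = ∑ x, ρ x * ρ (x - y))
    (α : ℝ) (hα : 1 ≤ α)
    (hmain : ρY 0 / α ≤ ∑ x, ∑ y, ρ x * ρY y * ρY (x * y))
    (h0 : ρ 0 ≤ 1 / (4 * α)) (hY0 : ρY 0 ≤ 1 / (4 * α)) :
    ∃ A : Finset (ZMod p), (0 : ZMod p) ∉ A ∧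
      1 / (2 ^ 31 * α ^ 10 * ρY 0) ≤ (A.card : ℝ) ∧ (A.card : ℝ) ≤ 8 * α / ρY 0 ∧
      (max (A + A).card (A * A).card : ℝ) ≤ 2 ^ 878 * α ^ 294 * (A.card : ℝ) := by
  obtain rfl : ρY = autocorr ρ := funext hρY
  exact exists_set_with_small_sumset_and_productset_general hρ0 hρ1 hα hmain h0 hY0
end
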